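/- lim_{s→1⁻} (1-s) ∫_{H ∩ Q} ∫_{H^c ∩ Q^c} |x-y|^{-(n+s)} dx dy = 0, where H = {x ∈ ℝⁿ : xₙ ≤ 0} and Q = (-1/2, 1/2)ⁿ. -/

import Mathlib

open Set Filter MeasureTheory

/-!
Integrating in polar coordinates, `∫_B |x - y| ^ (-(n + s)) dy ≤ n ω_n r ^ (-s) / s` as soon as `B`
stays at distance at least `r` from `x`. Hence the interaction of `A` with `B` remains bounded as
`s → 1`, and is killed by the factor `1 - s`, whenever `1 / dist (·, B)` is integrable on `A`.

For `A = H ∩ Q` and `B = Hᶜ ∩ Qᶜ` the two sets only meet along an edge of codimension two: a point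
of `B` lies across the hyperplane `x_k = 0` and outside `Q`, so it is at distance at least
`max |x_k| (1/2 - |x_i|) ≥ √(|x_k| (1/2 - |x_i|))` from `x ∈ A` for some `i ≠ k` (or at distance
at least `1/2`). The inverse of this lower bound is dominated by a product of integrable functions
of one variable.
-/

open Metric Module
open scoped Topology

section Interaction

theorem indicator_compl_ball_comp_norm_sub {E : Type*} [SeminormedAddCommGroup E] (f : ℝ → ℝ)
    (x : E) (r : ℝ) :
    (ball x r)ᶜ.indicator (fun y ↦ f ‖x - y‖) = fun y ↦ (Ici r).indicator f ‖x - y‖ := by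
  ext y
  simp only [indicator, mem_compl_iff, mem_ball', dist_eq_norm, not_lt, mem_Ici]

theorem eqOn_pow_pred_smul_indicator_rpow {n : ℕ} (hn : n ≠ 0) (r s : ℝ) :
    EqOn (fun t ↦ t ^ (n - 1) • (Ici r).indicator (· ^ (-((n : ℝ) + s))) t)
      ((Ici r).indicator (· ^ (-s - 1))) (Ioi 0) := by
  intro t (ht : 0 < t)
  have hpow : t ^ (n - 1) * t ^ (-((n : ℝ) + s)) = t ^ (-s - 1) := by
    rw [← Real.rpow_natCast, ← Real.rpow_add ht, Nat.cast_pred (Nat.pos_of_ne_zero hn)]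
    ring_nf
  by_cases htr : t ∈ Ici r
  · simp only [indicator_of_mem htr, smul_eq_mul, hpow]
  · simp only [indicator_of_notMem htr, smul_zero]

theorem rpow_neg_le_one_add_inv {r s : ℝ} (hr : 0 < r) (hs₀ : 0 ≤ s) (hs₁ : s ≤ 1) :
    r ^ (-s) ≤ 1 + r⁻¹ := by
  rcases le_total r 1 with h | h
  · have := Real.rpow_le_rpow_of_exponent_ge hr h (neg_le_neg hs₁)
    rw [Real.rpow_neg_one] at this
    linarith
  · have := Real.rpow_le_one_of_one_le_of_nonpos h (neg_nonpos.2 hs₀)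
    linarith [inv_pos.2 hr]

variable {E : Type*} [NormedAddCommGroup E] [NormedSpace ℝ E] [MeasurableSpace E]

/-- The interaction `∫_A ∫_B |x - y| ^ (-(n + s)) dy dx` of two sets in an `n`-dimensional space,
from which the fractional `s`-perimeter is built. As a Bochner integral it would be `0` if it
diverged. -/
noncomputable def fractionalInteraction (μ : Measure E) (s : ℝ) (A B : Set E) : ℝ :=
  ∫ x in A, ∫ y in B, ‖x - y‖ ^ (-((finrank ℝ E : ℝ) + s)) ∂μ ∂μ

theorem fractionalInteraction_nonneg (μ : Measure E) (s : ℝ) (A B : Set E) :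
    0 ≤ fractionalInteraction μ s A B :=
  integral_nonneg fun _ ↦ integral_nonneg fun _ ↦ by positivity

variable [FiniteDimensional ℝ E] [Nontrivial E] [BorelSpace E]
  (μ : Measure E) [μ.IsAddHaarMeasure] {s r : ℝ}

theorem integrableOn_compl_ball_norm_sub_rpow (x : E) (hs : 0 < s) (hr : 0 < r) :
    IntegrableOn (fun y ↦ ‖x - y‖ ^ (-((finrank ℝ E : ℝ) + s))) (ball x r)ᶜ μ := by
  rw [← integrable_indicator_iff measurableSet_ball.compl,
    indicator_compl_ball_comp_norm_sub (· ^ (-((finrank ℝ E : ℝ) + s)))]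
  refine Integrable.comp_sub_left (f := fun z ↦ (Ici r).indicator _ ‖z‖) ?_ x
  rw [integrable_fun_norm_addHaar, integrableOn_congr_fun
    (eqOn_pow_pred_smul_indicator_rpow finrank_pos.ne' r s) measurableSet_Ioi]
  have hIci : IntegrableOn (fun t : ℝ ↦ t ^ (-s - 1)) (Ici r) :=
    (integrableOn_Ici_iff_integrableOn_Ioi).2 (integrableOn_Ioi_rpow_of_lt (by linarith) hr)
  exact (hIci.integrable_indicator measurableSet_Ici).integrableOn

theorem setIntegral_compl_ball_norm_sub_rpow (x : E) (hs : 0 < s) (hr : 0 < r) :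
    ∫ y in (ball x r)ᶜ, ‖x - y‖ ^ (-((finrank ℝ E : ℝ) + s)) ∂μ =
      finrank ℝ E * μ.real (ball 0 1) * (r ^ (-s) / s) := by
  have radial : ∫ t in Ioi 0,
      t ^ (finrank ℝ E - 1) • (Ici r).indicator (· ^ (-((finrank ℝ E : ℝ) + s))) t =
        r ^ (-s) / s := by
    rw [setIntegral_congr_fun measurableSet_Ioi
        (eqOn_pow_pred_smul_indicator_rpow finrank_pos.ne' r s),
      setIntegral_indicator measurableSet_Ici, inter_eq_right.2 (Ici_subset_Ioi.2 hr),
      integral_Ici_eq_integral_Ioi, integral_Ioi_rpow_of_lt (by linarith) hr,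
      sub_add_cancel, neg_div_neg_eq]
  rw [← integral_indicator measurableSet_ball.compl,
    indicator_compl_ball_comp_norm_sub (· ^ (-((finrank ℝ E : ℝ) + s))),
    integral_sub_left_eq_self (fun z ↦ (Ici r).indicator (· ^ (-((finrank ℝ E : ℝ) + s))) ‖z‖),
    integral_fun_norm_addHaar, radial, nsmul_eq_mul, smul_eq_mul, mul_assoc]

theorem setIntegral_norm_sub_rpow_le {x : E} {B : Set E} (hs : 0 < s) (hr : 0 < r)
    (hB : ∀ y ∈ B, r ≤ ‖x - y‖) :
    ∫ y in B, ‖x - y‖ ^ (-((finrank ℝ E : ℝ) + s)) ∂μ ≤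
      finrank ℝ E * μ.real (ball 0 1) * (r ^ (-s) / s) := by
  rw [← setIntegral_compl_ball_norm_sub_rpow μ x hs hr]
  have hsub : B ⊆ (ball x r)ᶜ := fun y hy ↦ by
    simpa only [mem_compl_iff, mem_ball', dist_eq_norm, not_lt] using hB y hy
  exact setIntegral_mono_set (integrableOn_compl_ball_norm_sub_rpow μ x hs hr)
    (.of_forall fun _ ↦ by positivity) hsub.eventuallyLE

variable {A B : Set E} {w : E → ℝ}

theorem fractionalInteraction_le (hA : μ A ≠ ⊤) (hw : IntegrableOn (fun x ↦ (w x)⁻¹) A μ)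
    (hwB : ∀ᵐ x ∂μ.restrict A, 0 < w x ∧ ∀ y ∈ B, w x ≤ ‖x - y‖) (hs₀ : 0 < s) (hs₁ : s ≤ 1) :
    fractionalInteraction μ s A B ≤
      ∫ x in A, finrank ℝ E * μ.real (ball 0 1) * ((1 + (w x)⁻¹) / s) ∂μ := by
  refine integral_mono_of_nonneg (.of_forall fun x ↦ integral_nonneg fun y ↦ by positivity)
    ((((integrableOn_const hA).add hw).div_const s).const_mul _) ?_
  filter_upwards [hwB] with x ⟨hwx, hxB⟩
  calc ∫ y in B, ‖x - y‖ ^ (-((finrank ℝ E : ℝ) + s)) ∂μ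
      ≤ finrank ℝ E * μ.real (ball 0 1) * (w x ^ (-s) / s) :=
        setIntegral_norm_sub_rpow_le μ hs₀ hwx hxB
    _ ≤ finrank ℝ E * μ.real (ball 0 1) * ((1 + (w x)⁻¹) / s) := by
        gcongr
        exact rpow_neg_le_one_add_inv hwx hs₀.le hs₁

theorem tendsto_one_sub_mul_fractionalInteraction (hA : μ A ≠ ⊤)
    (hw : IntegrableOn (fun x ↦ (w x)⁻¹) A μ)
    (hwB : ∀ᵐ x ∂μ.restrict A, 0 < w x ∧ ∀ y ∈ B, w x ≤ ‖x - y‖) :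
    Tendsto (fun s ↦ (1 - s) * fractionalInteraction μ s A B) (𝓝[<] 1) (𝓝 0) := by
  set M := ∫ x in A, finrank ℝ E * μ.real (ball 0 1) * (1 + (w x)⁻¹) ∂μ
  have hM : Tendsto (fun s ↦ (1 - s) * (M / s)) (𝓝[<] 1) (𝓝 0) := by
    have : ContinuousAt (fun s ↦ (1 - s) * (M / s)) 1 := by fun_prop (disch := norm_num)
    simpa only [sub_self, zero_mul] using this.tendsto.mono_left nhdsWithin_le_nhds
  have hs : ∀ᶠ s : ℝ in 𝓝[<] 1, s ∈ Ioo 0 1 := Ioo_mem_nhdsLT one_pos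
  refine squeeze_zero' ?_ ?_ hM
  · filter_upwards [hs] with s hs
    exact mul_nonneg (sub_nonneg.2 hs.2.le) (fractionalInteraction_nonneg μ s A B)
  · filter_upwards [hs] with s hs
    refine mul_le_mul_of_nonneg_left ?_ (sub_nonneg.2 hs.2.le)
    refine (fractionalInteraction_le μ hA hw hwB hs.1 hs.2.le).trans_eq ?_
    simp only [M, ← mul_div_assoc, integral_div]

end Interaction

section OneVariable

theorem integrableOn_inv_sqrt_min_sub (c : ℝ) :
    IntegrableOn (fun t : ℝ ↦ (√(min t (c - t)))⁻¹) (Ioo 0 c) := by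
  have hrpow : IntervalIntegrable (fun t : ℝ ↦ t ^ (-(1 / 2) : ℝ)) volume 0 c :=
    intervalIntegral.intervalIntegrable_rpow' (by norm_num)
  have hleft : IntegrableOn (fun t : ℝ ↦ t ^ (-(1 / 2) : ℝ)) (Ioo 0 c) :=
    hrpow.1.mono_set Ioo_subset_Ioc_self
  have hright : IntegrableOn (fun t : ℝ ↦ (c - t) ^ (-(1 / 2) : ℝ)) (Ioo 0 c) :=
    IntegrableOn.mono_set (by simpa using (hrpow.comp_sub_left c).2) Ioo_subset_Ioc_self
  refine IntegrableOn.congr_fun (hleft.sup hright) (fun t ht ↦ ?_) measurableSet_Ioo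
  have ht' : 0 < c - t := sub_pos.2 ht.2
  rw [Real.sqrt_eq_rpow, ← Real.rpow_neg (le_min ht.1.le ht'.le), Pi.sup_apply]
  rcases le_total t (c - t) with h | h
  · rw [min_eq_left h, sup_eq_left]
    exact Real.rpow_le_rpow_of_nonpos ht.1 h (by norm_num)
  · rw [min_eq_right h, sup_eq_right]
    exact Real.rpow_le_rpow_of_nonpos ht' h (by norm_num)

/-- The distance of `t ∈ [-1/2, 1/2]` to `{-1/2, 0, 1/2}`; the coordinates of a point of the unit
cube are measured by it at once against the walls of the cube and the coordinate hyperplanes. -/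
noncomputable def wallDist (t : ℝ) : ℝ :=
  min |t| (1 / 2 - |t|)

theorem wallDist_le_quarter (t : ℝ) : wallDist t ≤ 1 / 4 := by
  rcases le_total |t| (1 / 4) with h | h
  · exact (min_le_left _ _).trans h
  · exact (min_le_right _ _).trans (by linarith)

theorem sqrt_wallDist_le_half (t : ℝ) : √(wallDist t) ≤ 1 / 2 :=
  Real.sqrt_le_iff.2 ⟨by norm_num, (wallDist_le_quarter t).trans_eq (by norm_num)⟩

theorem wallDist_pos {t : ℝ} (h₀ : t ≠ 0) (h₁ : |t| < 1 / 2) : 0 < wallDist t :=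
  lt_min (abs_pos.2 h₀) (sub_pos.2 h₁)

theorem integrableOn_inv_sqrt_wallDist :
    IntegrableOn (fun t ↦ (√(wallDist t))⁻¹) (Ioo (-(1 / 2)) (1 / 2)) := by
  have h := (integrableOn_fun_norm_addHaar (volume : Measure ℝ) (r := 1 / 2)
    (f := fun u ↦ (√(min u (1 / 2 - u)))⁻¹)).2
    (by simpa using integrableOn_inv_sqrt_min_sub (1 / 2))
  simpa [wallDist, Real.ball_eq_Ioo] using h

end OneVariable

section Cube

variable {ι : Type*}

/-- The half-space `{x | x_k ≤ 0}`. -/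
def lowerHalfSpace (k : ι) : Set (EuclideanSpace ℝ ι) :=
  {x | x k ≤ 0}

variable (ι) in
/-- The open unit cube `(-1/2, 1/2)ⁿ` centered at the origin, with coordinates indexed by `ι`. -/
def centeredUnitCube : Set (EuclideanSpace ℝ ι) :=
  {x | ∀ i, |x i| < 1 / 2}

theorem measurableSet_lowerHalfSpace (k : ι) : MeasurableSet (lowerHalfSpace k) :=
  measurableSet_le (by fun_prop) measurable_const

theorem measurableSet_centeredUnitCube [Countable ι] : MeasurableSet (centeredUnitCube ι) := by
  simp only [centeredUnitCube, ofPred_forall]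
  exact .iInter fun i ↦ measurableSet_lt (by fun_prop) measurable_const

theorem centeredUnitCube_eq_preimage_pi :
    centeredUnitCube ι =
      (MeasurableEquiv.toLp 2 (ι → ℝ)).symm ⁻¹' univ.pi fun _ ↦ Ioo (-(1 / 2)) (1 / 2) := by
  ext x
  simp [centeredUnitCube, abs_lt]

variable [Fintype ι]

theorem volume_centeredUnitCube : volume (centeredUnitCube ι) = 1 := by
  rw [centeredUnitCube_eq_preimage_pi,
    (EuclideanSpace.volume_preserving_symm_measurableEquiv_toLp ι).measure_preimage_equiv,
    Real.volume_pi_Ioo]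
  norm_num

theorem integrableOn_preimage_pi_fintype_prod {s : ι → Set ℝ} {f : ι → ℝ → ℝ}
    (hf : ∀ i, IntegrableOn (f i) (s i)) :
    IntegrableOn (fun x : EuclideanSpace ℝ ι ↦ ∏ i, f i (x i))
      ((MeasurableEquiv.toLp 2 (ι → ℝ)).symm ⁻¹' univ.pi s) := by
  refine ((EuclideanSpace.volume_preserving_symm_measurableEquiv_toLp ι).integrableOn_comp_preimage
    (MeasurableEquiv.measurableEmbedding _) (f := fun x ↦ ∏ i, f i (x i))).2 ?_
  rw [IntegrableOn, volume_pi, Measure.restrict_pi_pi]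
  exact Integrable.fintype_prod hf

theorem ae_forall_coord_ne_zero : ∀ᵐ x : EuclideanSpace ℝ ι, ∀ i, x i ≠ 0 :=
  (EuclideanSpace.volume_preserving_symm_measurableEquiv_toLp ι).quasiMeasurePreserving.ae
    (ae_all_iff.2 fun i ↦ Measure.ae_eval_ne (fun _ ↦ volume) i 0)

/-- The weight `∏ i, √(wallDist (x i))`, a lower bound for the distance from a point `x` of
`lowerHalfSpace k ∩ centeredUnitCube ι` to `(lowerHalfSpace k)ᶜ ∩ (centeredUnitCube ι)ᶜ`. It is
a product over all coordinates so that its inverse can be integrated one variable at a time. -/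
noncomputable def cubeWeight (x : EuclideanSpace ℝ ι) : ℝ :=
  ∏ i, √(wallDist (x i))

theorem cubeWeight_pos {x : EuclideanSpace ℝ ι} (hx : x ∈ centeredUnitCube ι)
    (hx₀ : ∀ i, x i ≠ 0) : 0 < cubeWeight x :=
  Finset.prod_pos fun i _ ↦ Real.sqrt_pos.2 (wallDist_pos (hx₀ i) (hx i))

theorem integrableOn_inv_cubeWeight :
    IntegrableOn (fun x ↦ (cubeWeight x)⁻¹) (centeredUnitCube ι) := by
  simpa only [cubeWeight, centeredUnitCube_eq_preimage_pi, Finset.prod_inv_distrib] using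
    integrableOn_preimage_pi_fintype_prod fun _ : ι ↦ integrableOn_inv_sqrt_wallDist

theorem cubeWeight_le_prod (x : EuclideanSpace ℝ ι) (t : Finset ι) :
    cubeWeight x ≤ ∏ i ∈ t, √(wallDist (x i)) :=
  Finset.prod_le_prod_of_subset_of_le_one t.subset_univ (fun _ _ ↦ Real.sqrt_nonneg _)
    fun i _ _ ↦ (sqrt_wallDist_le_half (x i)).trans (by norm_num)

theorem cubeWeight_le_norm_sub {k : ι} {x y : EuclideanSpace ℝ ι} (hx : x ∈ lowerHalfSpace k)
    (hyH : y ∉ lowerHalfSpace k) (hyQ : y ∉ centeredUnitCube ι) :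
    cubeWeight x ≤ ‖x - y‖ := by
  have hxk : x k ≤ 0 := hx
  have hyk : 0 < y k := not_le.1 hyH
  obtain ⟨i, hi⟩ : ∃ i, 1 / 2 ≤ |y i| := by
    simpa only [centeredUnitCube, mem_ofPred_eq, not_forall, not_lt] using hyQ
  have hcoord (j : ι) : |x j - y j| ≤ ‖x - y‖ := PiLp.norm_apply_le (x - y) j
  have hk : -x k + y k ≤ ‖x - y‖ := by linarith [neg_abs_le (x k - y k), hcoord k]
  by_cases hik : i = k
  · subst hik
    rw [abs_of_pos hyk] at hi
    calc cubeWeight x ≤ √(wallDist (x i)) := by simpa using cubeWeight_le_prod x {i}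
      _ ≤ 1 / 2 := sqrt_wallDist_le_half _
      _ ≤ ‖x - y‖ := by linarith
  · have hwallk : wallDist (x k) ≤ ‖x - y‖ := by
      refine (min_le_left _ _).trans ?_
      rw [abs_of_nonpos hxk]
      linarith
    have hwalli : wallDist (x i) ≤ ‖x - y‖ := by
      refine (min_le_right _ _).trans ?_
      linarith [abs_sub_abs_le_abs_sub (y i) (x i), abs_sub_comm (y i) (x i), hcoord i]
    classical
    calc cubeWeight x ≤ √(wallDist (x i)) * √(wallDist (x k)) := by
          simpa only [Finset.prod_pair hik] using cubeWeight_le_prod x {i, k}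
      _ ≤ √‖x - y‖ * √‖x - y‖ := by gcongr
      _ = ‖x - y‖ := Real.mul_self_sqrt (norm_nonneg _)

theorem stmt10_general (k : ι) :
    Tendsto
      (fun s ↦ (1 - s) * fractionalInteraction volume s (lowerHalfSpace k ∩ centeredUnitCube ι)
        ((lowerHalfSpace k)ᶜ ∩ (centeredUnitCube ι)ᶜ))
      (𝓝[<] 1) (𝓝 0) := by
  have : Nonempty ι := ⟨k⟩
  have hvol : volume (centeredUnitCube ι) ≠ ⊤ :=
    volume_centeredUnitCube.trans_ne ENNReal.one_ne_top
  refine tendsto_one_sub_mul_fractionalInteraction volume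
    (measure_ne_top_of_subset inter_subset_right hvol)
    (integrableOn_inv_cubeWeight.mono_set inter_subset_right) ?_
  filter_upwards [ae_restrict_of_ae ae_forall_coord_ne_zero, ae_restrict_mem
    ((measurableSet_lowerHalfSpace k).inter measurableSet_centeredUnitCube)] with x hx₀ ⟨hxH, hxQ⟩
  exact ⟨cubeWeight_pos hxQ hx₀, fun y ⟨hyH, hyQ⟩ ↦ cubeWeight_le_norm_sub hxH hyH hyQ⟩

end Cube

/-- the cross interaction between `H ∩ Q` and `Hᶜ ∩ Qᶜ` vanishes after
rescaling by `(1-s)` as `s → 1⁻`.  Here the ambient dimension is `n + 1`, `H` is the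
lower halfspace and `Q` the open unit cube centered at the origin. -/
theorem stmt10 (n : ℕ) :
    Filter.Tendsto
      (fun s : ℝ => (1 - s) *
        ∫ x in {x : EuclideanSpace ℝ (Fin (n + 1)) | x (Fin.last n) ≤ 0} ∩
            {x : EuclideanSpace ℝ (Fin (n + 1)) | ∀ i, |x i| < 1 / 2},
          ∫ y in {x : EuclideanSpace ℝ (Fin (n + 1)) | x (Fin.last n) ≤ 0}ᶜ ∩
              {x : EuclideanSpace ℝ (Fin (n + 1)) | ∀ i, |x i| < 1 / 2}ᶜ,
            ‖x - y‖ ^ (-(((n : ℝ) + 1) + s)))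
      (nhdsWithin 1 (Set.Iio 1)) (nhds 0) := by
  simpa only [fractionalInteraction, lowerHalfSpace, centeredUnitCube, finrank_euclideanSpace,
    Fintype.card_fin, Nat.cast_add_one] using stmt10_general (Fin.last n)
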